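/- Every locally finite tree with infinitely many ends and only finitely many orbits of vertices under its automorphism group is quasi-isometric to the 3-regular tree. -/

import Mathlib

open SimpleGraph

universe u v

/-! ### Quasi-isometries -/

/-- `f` is a `(γ, c)`-quasi-isometry from `G` to `H`. -/
def IsQIWith {V : Type u} {W : Type v} (G : SimpleGraph V) (H : SimpleGraph W)
    (γ c : ℝ) (f : V → W) : Prop :=
  (∀ u v : V, γ⁻¹ * (G.dist u v : ℝ) - c ≤ (H.dist (f u) (f v) : ℝ) ∧
      (H.dist (f u) (f v) : ℝ) ≤ γ * (G.dist u v : ℝ) + c) ∧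
  ∀ w : W, ∃ x : V, (H.dist w (f x) : ℝ) ≤ c

/-- `G` and `H` are quasi-isometric. -/
def QuasiIsometric {V : Type u} {W : Type v} (G : SimpleGraph V) (H : SimpleGraph W) : Prop :=
  ∃ (γ c : ℝ) (f : V → W), 1 ≤ γ ∧ 0 ≤ c ∧ IsQIWith G H γ c f

/-- `H` embeds quasi-isometrically into `G`. -/
def QIEmbeds {V : Type u} {W : Type v} (H : SimpleGraph V) (G : SimpleGraph W) : Prop :=
  ∃ (γ c : ℝ) (f : V → W), 1 ≤ γ ∧ 0 ≤ c ∧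
    ∀ u v : V, γ⁻¹ * (H.dist u v : ℝ) - c ≤ (G.dist (f u) (f v) : ℝ) ∧
      (G.dist (f u) (f v) : ℝ) ≤ γ * (H.dist u v : ℝ) + c

/-! ### Basic graph properties -/

/-- Every vertex has finite degree. -/
def LocallyFiniteGraph {V : Type u} (G : SimpleGraph V) : Prop :=
  ∀ v : V, (G.neighborSet v).Finite

/-- The automorphism group of `G` has finitely many orbits on the vertex set. -/
def QuasiTransitive {V : Type u} (G : SimpleGraph V) : Prop :=
  ∃ s : Set V, s.Finite ∧ ∀ v : V, ∃ u ∈ s, ∃ g : G ≃g G, g u = v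

/-- The automorphism group of `G` acts transitively on the vertex set. -/
def VertexTransitive {V : Type u} (G : SimpleGraph V) : Prop :=
  ∀ u v : V, ∃ g : G ≃g G, g u = v

/-- `G` has exactly one end. -/
def OneEnded {V : Type u} (G : SimpleGraph V) : Prop :=
  Nonempty G.end ∧ Subsingleton G.end

/-- `G` and `H` have the same number of ends (in the sense `0, 1, 2, …, ∞`). -/
def SameNumberOfEnds {V : Type u} {W : Type v} (G : SimpleGraph V) (H : SimpleGraph W) : Prop :=
  (Infinite G.end ∧ Infinite H.end) ∨
    (Finite G.end ∧ Finite H.end ∧ Nat.card G.end = Nat.card H.end)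

/-- There is `n : ℕ` such that every two distinct ends of `G` can be separated by removing
at most `n` vertices. -/
def Accessible {V : Type u} (G : SimpleGraph V) : Prop :=
  ∃ n : ℕ, ∀ e e' : G.end, e ≠ e' →
    ∃ K : Finset V, K.card ≤ n ∧ e.val (Opposite.op K) ≠ e'.val (Opposite.op K)

/-- `T` is a tree all of whose vertices have degree `3`. -/
def CubicTree {W : Type u} (T : SimpleGraph W) : Prop :=
  T.IsTree ∧ ∀ v : W, (T.neighborSet v).ncard = 3

/-! ### Tree amalgamations -/

/-- The bipartite graph on `VT1 ⊕ VT2` given by the relation `R`. -/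
def bipGraph {VT1 VT2 : Type u} (R : VT1 → VT2 → Prop) : SimpleGraph (VT1 ⊕ VT2) :=
  SimpleGraph.fromRel fun x y =>
    match x, y with
    | Sum.inl a, Sum.inr b => R a b
    | _, _ => False

/-- All the data of a tree amalgamation `G1 ∗_T G2`: a semiregular tree (given by its
bipartition classes `VT1`, `VT2` and the adjacency relation `Tadj`), a labelling of the
edges of the tree by pairs of indices from `K1 × K2` such that the labels at each vertex of
`VTi` biject with `Ki` in the `i`-th coordinate, families of adhesion sets `S1`, `S2`
(all of the same cardinality), and the gluing bijections `glue k l : S1 k → S2 l`. -/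
structure TreeAmalgData {V1 V2 : Type u} (G1 : SimpleGraph V1) (G2 : SimpleGraph V2) :
    Type (u + 1) where
  VT1 : Type u
  VT2 : Type u
  K1 : Type u
  K2 : Type u
  Tadj : VT1 → VT2 → Prop
  isTree : (bipGraph Tadj).IsTree
  lab1 : ∀ a b, Tadj a b → K1
  lab2 : ∀ a b, Tadj a b → K2
  lab1_bij : ∀ a : VT1, Function.Bijective fun b : {b : VT2 // Tadj a b} => lab1 a b.1 b.2
  lab2_bij : ∀ b : VT2, Function.Bijective fun a : {a : VT1 // Tadj a b} => lab2 a.1 b a.2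
  S1 : K1 → Set V1
  S2 : K2 → Set V2
  S1_nonempty : ∀ k, (S1 k).Nonempty
  glue : K1 → K2 → V1 → V2
  glue_bij : ∀ k l, Set.BijOn (glue k l) (S1 k) (S2 l)

namespace TreeAmalgData

variable {V1 V2 : Type u} {G1 : SimpleGraph V1} {G2 : SimpleGraph V2}

/-- The vertex set of the graph `G1 + G2`. -/
abbrev PlusV (D : TreeAmalgData G1 G2) : Type u := (D.VT1 × V1) ⊕ (D.VT2 × V2)

/-- The relation describing the edges added between the copies `G1^u` and `G2^v`. -/
def cross (D : TreeAmalgData G1 G2) (p : D.VT1 × V1) (q : D.VT2 × V2) : Prop :=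
  ∃ h : D.Tadj p.1 q.1, p.2 ∈ D.S1 (D.lab1 p.1 q.1 h) ∧
    q.2 = D.glue (D.lab1 p.1 q.1 h) (D.lab2 p.1 q.1 h) p.2

def plusRel (D : TreeAmalgData G1 G2) : D.PlusV → D.PlusV → Prop
  | Sum.inl p, Sum.inl p' => p.1 = p'.1 ∧ G1.Adj p.2 p'.2
  | Sum.inr q, Sum.inr q' => q.1 = q'.1 ∧ G2.Adj q.2 q'.2
  | Sum.inl p, Sum.inr q => D.cross p q
  | Sum.inr _, Sum.inl _ => False

/-- The graph `G1 + G2`: disjoint copies of `G1` and `G2` along the tree, together with the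
added matching edges between adhesion sets. -/
def plusGraph (D : TreeAmalgData G1 G2) : SimpleGraph D.PlusV :=
  SimpleGraph.fromRel D.plusRel

/-- The relation identifying the endpoints of the added edges (which get contracted). -/
def idRel (D : TreeAmalgData G1 G2) : D.PlusV → D.PlusV → Prop :=
  fun x y => ∃ p q, x = Sum.inl p ∧ y = Sum.inr q ∧ D.cross p q

/-- Vertex set of the tree amalgamation `G1 ∗_T G2`. -/
abbrev AmalgV (D : TreeAmalgData G1 G2) : Type u := Quot D.idRel

/-- The canonical contraction map `ψ : V(G1 + G2) → V(G1 ∗_T G2)`. -/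
def toAmalg (D : TreeAmalgData G1 G2) : D.PlusV → D.AmalgV := Quot.mk _

/-- The tree amalgamation `G1 ∗_T G2`, obtained from `G1 + G2` by contracting all the
added edges. -/
def amalgGraph (D : TreeAmalgData G1 G2) : SimpleGraph D.AmalgV :=
  SimpleGraph.fromRel fun x y =>
    ∃ a b, x = D.toAmalg a ∧ y = D.toAmalg b ∧ D.plusGraph.Adj a b

/-- The tree vertex at which a vertex of `G1 + G2` lives. -/
def site (D : TreeAmalgData G1 G2) : D.PlusV → D.VT1 ⊕ D.VT2
  | Sum.inl p => Sum.inl p.1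
  | Sum.inr q => Sum.inr q.1

/-- The set of tree vertices hosting representatives of `x`; the identification size of `x`
is the number of its elements. -/
def support (D : TreeAmalgData G1 G2) (x : D.AmalgV) : Set (D.VT1 ⊕ D.VT2) :=
  {t | ∃ p, D.toAmalg p = x ∧ D.site p = t}

/-- Every vertex of `G1 ∗_T G2` has finite identification size. -/
def FiniteIdentification (D : TreeAmalgData G1 G2) : Prop :=
  ∀ x : D.AmalgV, (D.support x).Finite

/-- All adhesion sets are finite. -/
def FiniteAdhesion (D : TreeAmalgData G1 G2) : Prop :=
  (∀ k, (D.S1 k).Finite) ∧ ∀ l, (D.S2 l).Finite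

/-- The tree amalgamation is trivial: the contraction map restricts to a bijection on some
copy of `G1` or of `G2`. -/
def IsTrivial (D : TreeAmalgData G1 G2) : Prop :=
  (∃ a : D.VT1, Function.Bijective fun x : V1 => D.toAmalg (Sum.inl (a, x))) ∨
  ∃ b : D.VT2, Function.Bijective fun y : V2 => D.toAmalg (Sum.inr (b, y))

end TreeAmalgData

/-- Some group of automorphisms of `G` acts with finitely many orbits on the vertices of `G`
and with finitely many orbits on the family `S` of adhesion sets of `G`. -/
def GoodAction {V : Type u} (G : SimpleGraph V) {K : Type u} (S : K → Set V) : Prop :=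
  ∃ Γ : Subgroup (G ≃g G),
    (∃ s : Set V, s.Finite ∧ ∀ v : V, ∃ u ∈ s, ∃ g ∈ Γ, g u = v) ∧
    ∃ I : Set K, I.Finite ∧ ∀ k : K, ∃ k' ∈ I, ∃ g ∈ Γ, ⇑g '' S k' = S k

/-- A bundled graph. -/
structure BGraph : Type (u + 1) where
  V : Type u
  G : SimpleGraph V

/-- `Z` is (isomorphic to) a tree amalgamation of `X` and `Y` of finite adhesion and finite
identification. -/
def AmalgStep (X Y Z : BGraph.{u}) : Prop :=
  ∃ D : TreeAmalgData X.G Y.G,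
    D.FiniteAdhesion ∧ D.FiniteIdentification ∧ Nonempty (Z.G ≃g D.amalgGraph)

/-- `Z` is (isomorphic to) a tree amalgamation of `X` and `Y` of finite adhesion and finite
identification such that some group of automorphisms of each factor acts with finitely many
orbits on that factor and on the set of its adhesion sets. -/
def GoodAmalgStep (X Y Z : BGraph.{u}) : Prop :=
  ∃ D : TreeAmalgData X.G Y.G,
    D.FiniteAdhesion ∧ D.FiniteIdentification ∧
    GoodAction X.G D.S1 ∧ GoodAction Y.G D.S2 ∧ Nonempty (Z.G ≃g D.amalgGraph)

/-- `Z` is obtained from the list `l` of graphs by iterated tree amalgamations of finite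
adhesion and finite identification. -/
inductive IterAmalg : BGraph.{u} → List BGraph.{u} → Prop
  | single (X : BGraph) : IterAmalg X [X]
  | step {X Y Z : BGraph} {l1 l2 : List BGraph} :
      IterAmalg X l1 → IterAmalg Y l2 → AmalgStep X Y Z → IterAmalg Z (l1 ++ l2)

/-- `Z` is obtained from the list `l` of graphs by iterated tree amalgamations of finite
adhesion and finite identification with quasi-transitive actions on the factors and their
adhesion sets. -/
inductive GoodIterAmalg : BGraph.{u} → List BGraph.{u} → Prop
  | single (X : BGraph) : GoodIterAmalg X [X]
  | step {X Y Z : BGraph} {l1 l2 : List BGraph} :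
      GoodIterAmalg X l1 → GoodIterAmalg Y l2 → GoodAmalgStep X Y Z →
        GoodIterAmalg Z (l1 ++ l2)

/-- `l` is a factorisation of the graph `Gb`. -/
def IsFactorisation (Gb : BGraph.{u}) (l : List BGraph.{u}) : Prop :=
  (∀ X ∈ l, X.G.Connected ∧ LocallyFiniteGraph X.G ∧ QuasiTransitive X.G) ∧
    GoodIterAmalg Gb l

/-- A factorisation is terminal if every factor has at most one end. -/
def IsTerminal (l : List BGraph.{u}) : Prop := ∀ X ∈ l, Subsingleton X.G.end

/-
Every bushy tree of bounded degree (one whose branch vertices are coarsely dense) is coarsely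
equivalent to the rooted binary tree. Indeed, choose a root. The vertices with infinitely many
descendants form a subtree, the trunk, and if every vertex is within distance `R` of a branch
vertex, then the trunk is coarsely dense and each of its vertices has at least two, and boundedly
many, descendants in the trunk `2 * R + 1` levels further down. Words of a complete prefix code
of the right size then label these descendants, and reading labels along descending paths
identifies the trunk with the binary tree up to bounded distance.

A locally finite quasi-transitive tree with at least three ends has a branch vertex, and the
translates of one branch vertex are coarsely dense, so the tree is bushy.
-/

section CoarseEquivalence

variable {V W X : Type*} {G : SimpleGraph V} {H : SimpleGraph W} {K : SimpleGraph X}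

/-- Coarse equivalence of graphs, in the form in which it is checked for connected graphs: a pair
of maps which move the ends of an edge a bounded distance apart and are inverse to each other up
to bounded distance. -/
def CoarselyEquivalent (G : SimpleGraph V) (H : SimpleGraph W) : Prop :=
  ∃ (C : ℕ) (f : V → W) (g : W → V),
    (∀ u v, G.Adj u v → H.dist (f u) (f v) ≤ C) ∧ (∀ x y, H.Adj x y → G.dist (g x) (g y) ≤ C) ∧
      (∀ v, G.dist v (g (f v)) ≤ C) ∧ ∀ x, H.dist x (f (g x)) ≤ C

lemma dist_map_le_mul_dist (hG : G.Connected) (hH : H.Connected) {f : V → W} {C : ℕ}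
    (hf : ∀ u v, G.Adj u v → H.dist (f u) (f v) ≤ C) (u v : V) :
    H.dist (f u) (f v) ≤ C * G.dist u v := by
  obtain ⟨p, hp⟩ := hG.exists_walk_length_eq_dist u v
  rw [← hp]
  clear hp
  induction p with
  | nil => simp
  | @cons u w v h p ih =>
    calc H.dist (f u) (f v) ≤ H.dist (f u) (f w) + H.dist (f w) (f v) := hH.dist_triangle
      _ ≤ C + C * p.length := add_le_add (hf u w h) ih
      _ = C * (p.cons h).length := by rw [Walk.length_cons]; ring

namespace CoarselyEquivalent

lemma symm : CoarselyEquivalent G H → CoarselyEquivalent H G :=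
  fun ⟨C, f, g, hf, hg, hgf, hfg⟩ => ⟨C, g, f, hg, hf, hfg, hgf⟩

lemma trans (hG : G.Connected) (hH : H.Connected) (hK : K.Connected)
    (hGH : CoarselyEquivalent G H) (hHK : CoarselyEquivalent H K) : CoarselyEquivalent G K := by
  obtain ⟨C, f, g, hf, hg, hgf, hfg⟩ := hGH
  obtain ⟨C', f', g', hf', hg', hgf', hfg'⟩ := hHK
  have hle : C' * C ≤ C' * C + C * C' + C + C' := by lia
  have hle' : C * C' ≤ C' * C + C * C' + C + C' := by lia
  refine ⟨C' * C + C * C' + C + C', f' ∘ f, g ∘ g', fun u v h => ?_, fun x y h => ?_,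
    fun v => ?_, fun x => ?_⟩
  · calc K.dist (f' (f u)) (f' (f v)) ≤ C' * H.dist (f u) (f v) :=
          dist_map_le_mul_dist hH hK hf' _ _
      _ ≤ C' * C := by gcongr; exact hf u v h
      _ ≤ _ := hle
  · calc G.dist (g (g' x)) (g (g' y)) ≤ C * H.dist (g' x) (g' y) :=
          dist_map_le_mul_dist hH hG hg _ _
      _ ≤ C * C' := by gcongr; exact hg' x y h
      _ ≤ _ := hle'
  · calc G.dist v (g (g' (f' (f v))))
        ≤ G.dist v (g (f v)) + G.dist (g (f v)) (g (g' (f' (f v)))) := hG.dist_triangle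
      _ ≤ C + C * H.dist (f v) (g' (f' (f v))) :=
          add_le_add (hgf v) (dist_map_le_mul_dist hH hG hg _ _)
      _ ≤ C + C * C' := by gcongr; exact hgf' (f v)
      _ ≤ _ := by lia
  · calc K.dist x (f' (f (g (g' x))))
        ≤ K.dist x (f' (g' x)) + K.dist (f' (g' x)) (f' (f (g (g' x)))) := hK.dist_triangle
      _ ≤ C' + C' * H.dist (g' x) (f (g (g' x))) :=
          add_le_add (hfg' x) (dist_map_le_mul_dist hH hK hf' _ _)
      _ ≤ C' + C' * C := by gcongr; exact hfg (g' x)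
      _ ≤ _ := by lia

lemma quasiIsometric (hG : G.Connected) (hH : H.Connected) (h : CoarselyEquivalent G H) :
    QuasiIsometric G H := by
  obtain ⟨C, f, g, hf, hg, hgf, hfg⟩ := h
  have upper (u v : V) : (H.dist (f u) (f v) : ℝ) ≤ C * G.dist u v :=
    mod_cast dist_map_le_mul_dist hG hH hf u v
  have lower (u v : V) : (G.dist u v : ℝ) ≤ C * H.dist (f u) (f v) + 2 * C := by
    have hu := hG.dist_triangle (u := u) (v := g (f u)) (w := v)
    have hv := hG.dist_triangle (u := g (f u)) (v := g (f v)) (w := v)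
    have huv := dist_map_le_mul_dist hH hG hg (f u) (f v)
    have hv' := hgf v
    rw [G.dist_comm] at hv'
    have := hgf u
    exact_mod_cast (by lia : G.dist u v ≤ C * H.dist (f u) (f v) + 2 * C)
  refine ⟨C + 1, 2 * C, f, by simp, by positivity, fun u v => ⟨?_, ?_⟩, fun x => ⟨g x, ?_⟩⟩
  · rw [sub_le_iff_le_add, inv_mul_le_iff₀ (by positivity)]
    calc (G.dist u v : ℝ) ≤ C * H.dist (f u) (f v) + 2 * C := lower u v
      _ ≤ C * H.dist (f u) (f v) + 2 * C + (H.dist (f u) (f v) + C * (2 * C)) :=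
          le_add_of_nonneg_right (by positivity)
      _ = (C + 1) * (H.dist (f u) (f v) + 2 * C) := by ring
  · calc (H.dist (f u) (f v) : ℝ) ≤ C * G.dist u v := upper u v
      _ ≤ C * G.dist u v + (G.dist u v + 2 * C) := le_add_of_nonneg_right (by positivity)
      _ = (C + 1) * G.dist u v + 2 * C := by ring
  · calc (H.dist x (f (g x)) : ℝ) ≤ C := mod_cast hfg x
      _ ≤ 2 * C := le_mul_of_one_le_left (by positivity) one_le_two

end CoarselyEquivalent

end CoarseEquivalence

section BinaryTree

/-- The rooted binary tree: its vertices are the binary words, and the neighbours of a word `w`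
further away from the root `[]` are the words obtained by putting a letter in front of `w`. -/
def binaryTree : SimpleGraph (List Bool) :=
  SimpleGraph.fromRel fun w x => ∃ b, x = b :: w

lemma binaryTree_adj_cons (b : Bool) (w : List Bool) : binaryTree.Adj (b :: w) w :=
  (SimpleGraph.fromRel_adj _ _ _).2 ⟨List.cons_ne_self b w, Or.inr ⟨b, rfl⟩⟩

lemma binaryTree_connected : binaryTree.Connected := by
  have reachable_nil (w : List Bool) : binaryTree.Reachable w [] := by
    induction w with
    | nil => rfl
    | cons b w ih => exact (binaryTree_adj_cons b w).reachable.trans ih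
  exact ⟨fun w x => (reachable_nil w).trans (reachable_nil x).symm⟩

lemma binaryTree_dist_append_le (s w : List Bool) : binaryTree.dist (s ++ w) w ≤ s.length := by
  induction s with
  | nil => simp
  | cons b s ih =>
    calc binaryTree.dist (b :: (s ++ w)) w
        ≤ binaryTree.dist (b :: (s ++ w)) (s ++ w) + binaryTree.dist (s ++ w) w :=
          binaryTree_connected.dist_triangle
      _ ≤ 1 + s.length := add_le_add (dist_eq_one_iff_adj.2 (binaryTree_adj_cons b _)).le ih
      _ = (b :: s).length := by rw [List.length_cons, add_comm]

/-- The `i`-th word of a complete prefix code with `n` words. Words are read from right to left: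
the code words are `1…10` and, for the last index, `1…1`. -/
def codeword (n i : ℕ) : List Bool :=
  if i + 1 < n then false :: List.replicate i true else List.replicate i true

lemma length_codeword_le {n i : ℕ} (hi : i < n) : (codeword n i).length ≤ n := by
  unfold codeword
  split_ifs <;> simp only [List.length_cons, List.length_replicate] <;> lia

variable {V : Type*} (r : V) (n : V → ℕ) (c : V → ℕ → V)

/-- Walks from `r` along a binary word in a system where `v` has `n v ≥ 2` children
`c v 0, …, c v (n v - 1)`. In state `(v, j)` the first `j` children of `v` have been rejected: the
letter `0` accepts the next child, the letter `1` rejects it, which amounts to accepting the last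
one if only two are left. -/
def decode : List Bool → V × ℕ
  | [] => (r, 0)
  | false :: w => (c (decode w).1 (decode w).2, 0)
  | true :: w =>
    if (decode w).2 + 2 < n (decode w).1 then ((decode w).1, (decode w).2 + 1)
    else (c (decode w).1 ((decode w).2 + 1), 0)

variable {r n c}

lemma decode_replicate_append {w : List Bool} {v : V} (hw : decode r n c w = (v, 0)) {j : ℕ}
    (hj : j + 2 ≤ n v) : decode r n c (List.replicate j true ++ w) = (v, j) := by
  induction j with
  | zero => simpa using hw
  | succ j ih =>
    rw [List.replicate_succ, List.cons_append, decode, ih (by lia), if_pos (by lia)]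

lemma decode_codeword_append {w : List Bool} {v : V} (hw : decode r n c w = (v, 0))
    (hv : 2 ≤ n v) {i : ℕ} (hi : i < n v) :
    decode r n c (codeword (n v) i ++ w) = (c v i, 0) := by
  unfold codeword
  split_ifs with hlast
  · rw [List.cons_append, decode, decode_replicate_append hw (by lia)]
  · obtain ⟨j, rfl⟩ : ∃ j, i = j + 1 := ⟨i - 1, by lia⟩
    rw [List.replicate_succ, List.cons_append, decode, decode_replicate_append hw (by lia),
      if_neg (by lia)]

/-- A system of code words: the root has the empty word, and the word of the `i`-th child of `v`
is the word of `v` extended by the `i`-th word of a code of size `n v`. -/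
structure IsCoding (r : V) (n : V → ℕ) (c : V → ℕ → V) (S : Set V) (f : V → List Bool) :
    Prop where
  root_mem : r ∈ S
  apply_root : f r = []
  two_le : ∀ v ∈ S, 2 ≤ n v
  child_mem : ∀ v ∈ S, ∀ i < n v, c v i ∈ S
  apply_child : ∀ v ∈ S, ∀ i < n v, f (c v i) = codeword (n v) i ++ f v

lemma IsCoding.decode_spec {S : Set V} {f : V → List Bool} (hf : IsCoding r n c S f)
    (w : List Bool) :
    (decode r n c w).1 ∈ S ∧ (decode r n c w).2 + 2 ≤ n (decode r n c w).1 ∧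
      w = List.replicate (decode r n c w).2 true ++ f (decode r n c w).1 := by
  induction w with
  | nil => simpa [decode, hf.root_mem, hf.apply_root] using hf.two_le r hf.root_mem
  | cons b w ih =>
    obtain ⟨hS, hn, hw⟩ := ih
    have child (i : ℕ) (hi : i < n (decode r n c w).1)
        (hbw : b :: w = codeword (n (decode r n c w).1) i ++ f (decode r n c w).1) :
        c (decode r n c w).1 i ∈ S ∧ 0 + 2 ≤ n (c (decode r n c w).1 i) ∧
          b :: w = List.replicate 0 true ++ f (c (decode r n c w).1 i) := by
      have hmem := hf.child_mem _ hS i hi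
      exact ⟨hmem, hf.two_le _ hmem, by simpa [hf.apply_child _ hS i hi] using hbw⟩
    cases b with
    | false =>
      refine child _ (by lia) ?_
      rw [codeword, if_pos (by lia), List.cons_append, ← hw]
    | true =>
      rw [decode]
      split_ifs with hlast
      · exact ⟨hS, by lia, by rw [List.replicate_succ, List.cons_append, ← hw]⟩
      · refine child _ (by lia) ?_
        rw [codeword, if_neg (by lia), List.replicate_succ, List.cons_append, ← hw]

end BinaryTree

lemma encard_biUnion_le_encard_mul {α β : Type*} {s : Set α} (hs : s.Finite) {t : α → Set β}
    {m : ℕ∞} (ht : ∀ a ∈ s, (t a).encard ≤ m) : (⋃ a ∈ s, t a).encard ≤ s.encard * m := by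
  lift s to Finset α using hs
  calc (⋃ a ∈ s, t a).encard ≤ ∑ a ∈ s, (t a).encard := s.set_encard_biUnion_le t
    _ ≤ s.card • m := s.sum_le_card_nsmul _ m ht
    _ = (s : Set α).encard * m := by rw [nsmul_eq_mul, Set.encard_coe_eq_coe_finsetCard]

section RootedTree

variable {V : Type*} {T : SimpleGraph V} {r : V}

open Classical in
/-- The parent of `v` in the tree `T` rooted at `r`: the neighbour of `v` closer to `r`. The root
is its own parent. -/
noncomputable def treeParent (T : SimpleGraph V) (r v : V) : V :=
  if h : ∃ u, T.Adj v u ∧ T.dist r v = T.dist r u + 1 then h.choose else v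

/-- The descendants of `v` in the tree `T` rooted at `r`, including `v` itself. -/
def descendants (T : SimpleGraph V) (r v : V) : Set V :=
  {u | ∃ i, (treeParent T r)^[i] u = v}

/-- The descendants of `v` which lie exactly `k` levels below `v`. The condition on distances
matters only for the root, which is its own parent. -/
def descendantsAt (T : SimpleGraph V) (r : V) (k : ℕ) (v : V) : Set V :=
  {u | (treeParent T r)^[k] u = v ∧ T.dist r u = T.dist r v + k}

lemma treeParent_root : treeParent T r r = r := by
  rw [treeParent, dif_neg]
  rintro ⟨u, -, hu⟩
  simp at hu

lemma exists_adj_dist_root_eq (hT : T.Connected) {v : V} (hv : v ≠ r) :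
    ∃ u, T.Adj v u ∧ T.dist r v = T.dist r u + 1 := by
  obtain ⟨w, hw⟩ := hT.exists_walk_length_eq_dist v r
  cases w with
  | nil => exact absurd rfl hv
  | @cons _ u _ hvu q =>
    refine ⟨u, hvu, le_antisymm ?_ ?_⟩
    · calc T.dist r v ≤ T.dist r u + T.dist u v := hT.dist_triangle
        _ = T.dist r u + 1 := by rw [dist_eq_one_iff_adj.2 hvu.symm]
    · rw [T.dist_comm (v := v), ← hw, Walk.length_cons, T.dist_comm (v := u)]
      exact Nat.succ_le_succ (dist_le q)

lemma treeParent_spec (hT : T.Connected) {v : V} (hv : v ≠ r) :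
    T.Adj v (treeParent T r v) ∧ T.dist r v = T.dist r (treeParent T r v) + 1 := by
  have h := exists_adj_dist_root_eq hT hv
  rw [treeParent, dif_pos h]
  exact h.choose_spec

lemma adj_treeParent (hT : T.Connected) {v : V} (hv : v ≠ r) : T.Adj v (treeParent T r v) :=
  (treeParent_spec hT hv).1

lemma dist_root_eq_dist_treeParent_add_one (hT : T.Connected) {v : V} (hv : v ≠ r) :
    T.dist r v = T.dist r (treeParent T r v) + 1 :=
  (treeParent_spec hT hv).2

lemma dist_treeParent_le_one (hT : T.Connected) (v : V) : T.dist v (treeParent T r v) ≤ 1 := by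
  by_cases hv : v = r
  · simp [hv, treeParent_root]
  · exact (dist_eq_one_iff_adj.2 (adj_treeParent hT hv)).le

lemma dist_iterate_treeParent_le (hT : T.Connected) (i : ℕ) (v : V) :
    T.dist v ((treeParent T r)^[i] v) ≤ i := by
  induction i with
  | zero => simp
  | succ i ih =>
    rw [Function.iterate_succ_apply']
    exact hT.dist_triangle.trans (add_le_add ih (dist_treeParent_le_one hT _))

lemma dist_root_iterate_treeParent (hT : T.Connected) (i : ℕ) (v : V) :
    T.dist r ((treeParent T r)^[i] v) = T.dist r v - i := by
  induction i with
  | zero => simp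
  | succ i ih =>
    rw [Function.iterate_succ_apply']
    by_cases h : (treeParent T r)^[i] v = r
    · rw [h, dist_self] at ih
      rw [h, treeParent_root, dist_self]
      lia
    · have := dist_root_eq_dist_treeParent_add_one hT h
      lia

lemma iterate_treeParent_mem_of_mem {I : Set V} (hI : ∀ v ∈ I, treeParent T r v ∈ I) {v : V}
    (hv : v ∈ I) (i : ℕ) : (treeParent T r)^[i] v ∈ I :=
  Set.MapsTo.iterate (f := treeParent T r) hI i hv

lemma treeParent_eq_of_adj (hT : T.IsTree) {u v : V} (huv : T.Adj v u)
    (h : T.dist r v = T.dist r u + 1) : treeParent T r v = u := by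
  have hv : v ≠ r := by
    rintro rfl
    simp at h
  have exists_path (w : V) (hvw : T.Adj v w) (h : T.dist r v = T.dist r w + 1) :
      ∃ q : T.Walk w r, (q.cons hvw).IsPath := by
    obtain ⟨q, hq⟩ := hT.connected.exists_walk_length_eq_dist w r
    refine ⟨q, Walk.isPath_of_length_eq_dist _ ?_⟩
    rw [Walk.length_cons, hq, T.dist_comm, ← h, T.dist_comm]
  -- Two neighbours closer to the root would give two paths to the root.
  obtain ⟨hvp, hp⟩ := treeParent_spec hT.connected hv
  obtain ⟨q, hq⟩ := exists_path u huv h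
  obtain ⟨q', hq'⟩ := exists_path _ hvp hp
  have := (hT.existsUnique_path v r).unique hq' hq
  simp only [Walk.cons.injEq] at this
  exact this.1

lemma treeParent_eq_or_eq (hT : T.IsTree) {u v : V} (huv : T.Adj u v) :
    treeParent T r u = v ∨ treeParent T r v = u :=
  (hT.dist_eq_dist_add_one_of_adj r huv).imp (treeParent_eq_of_adj hT huv)
    (treeParent_eq_of_adj hT huv.symm)

lemma mem_descendantsAt_one_of_adj (hT : T.IsTree) {u v : V} (huv : T.Adj v u)
    (hu : u ≠ treeParent T r v) : u ∈ descendantsAt T r 1 v := by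
  have hvu : treeParent T r u = v := (treeParent_eq_or_eq hT huv).resolve_left (Ne.symm hu)
  refine ⟨hvu, ?_⟩
  have hur : u ≠ r := by
    rintro rfl
    rw [treeParent_root] at hvu
    exact huv.ne hvu.symm
  rw [dist_root_eq_dist_treeParent_add_one hT.connected hur, hvu]

lemma neighborSet_subset_insert_descendantsAt (hT : T.IsTree) (v : V) :
    T.neighborSet v ⊆ insert (treeParent T r v) (descendantsAt T r 1 v) :=
  fun u hu => (em (u = treeParent T r v)).imp_right (mem_descendantsAt_one_of_adj hT hu)

lemma ne_root_of_mem_descendantsAt {k : ℕ} (hk : 0 < k) {u v : V}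
    (hu : u ∈ descendantsAt T r k v) : u ≠ r := by
  rintro rfl
  have := hu.2
  rw [dist_self] at this
  lia

lemma descendantsAt_one_subset_neighborSet (hT : T.Connected) (v : V) :
    descendantsAt T r 1 v ⊆ T.neighborSet v := by
  intro u hu
  have hadj := adj_treeParent hT (ne_root_of_mem_descendantsAt one_pos hu)
  exact hu.1 ▸ hadj.symm

lemma mem_descendants_self (v : V) : v ∈ descendants T r v :=
  ⟨0, rfl⟩

lemma descendants_subset_descendants_treeParent (v : V) :
    descendants T r v ⊆ descendants T r (treeParent T r v) := by
  rintro u ⟨i, rfl⟩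
  exact ⟨i + 1, Function.iterate_succ_apply' _ _ _⟩

lemma mem_descendants_iterate_of_dist_le (hT : T.IsTree) {u v : V} {d : ℕ} (h : T.dist u v ≤ d) :
    v ∈ descendants T r ((treeParent T r)^[d] u) := by
  obtain ⟨q, hq⟩ := hT.connected.exists_walk_length_eq_dist u v
  rw [← hq] at h
  clear hq
  induction q generalizing d with
  | nil =>
    induction d with
    | zero => exact mem_descendants_self _
    | succ d ih =>
      rw [Function.iterate_succ_apply']
      exact descendants_subset_descendants_treeParent _ (ih (by simp))
  | @cons u w v huw q ih =>
    obtain ⟨d, rfl⟩ : ∃ e, d = e + 1 := ⟨d - 1, by rw [Walk.length_cons] at h; lia⟩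
    specialize ih (d := d) (by simpa using h)
    rcases treeParent_eq_or_eq (r := r) hT huw with rfl | rfl
    · rwa [Function.iterate_succ_apply]
    · rw [← Function.iterate_succ_apply, Function.iterate_succ_apply',
        Function.iterate_succ_apply']
      exact descendants_subset_descendants_treeParent _
        (descendants_subset_descendants_treeParent _ ih)

lemma mem_descendantsAt_of_mem_descendants (hT : T.Connected) {u v : V}
    (hu : u ∈ descendants T r v) : u ∈ descendantsAt T r (T.dist r u - T.dist r v) v := by
  obtain ⟨i, rfl⟩ := hu
  have hi := dist_root_iterate_treeParent (r := r) hT i u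
  refine ⟨?_, by lia⟩
  rcases le_total i (T.dist r u) with h | h
  · rw [show T.dist r u - T.dist r ((treeParent T r)^[i] u) = i by lia]
  · have hd := dist_root_iterate_treeParent (r := r) hT (T.dist r u) u
    rw [Nat.sub_eq_zero_of_le h] at hi
    rw [Nat.sub_self] at hd
    rw [hi, Nat.sub_zero, ← (hT.dist_eq_zero_iff).1 hi, ← (hT.dist_eq_zero_iff).1 hd]

lemma descendantsAt_zero (v : V) : descendantsAt T r 0 v = {v} := by
  ext u
  simp +contextual [descendantsAt]

lemma mem_descendantsAt_add {i j : ℕ} {u v w : V} (hu : u ∈ descendantsAt T r j v)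
    (hv : v ∈ descendantsAt T r i w) : u ∈ descendantsAt T r (i + j) w := by
  obtain ⟨rfl, hu⟩ := hu
  obtain ⟨rfl, hv⟩ := hv
  exact ⟨Function.iterate_add_apply _ _ _ _, by lia⟩

lemma mem_descendantsAt_root (hT : T.Connected) (v : V) :
    v ∈ descendantsAt T r (T.dist r v) r := by
  have hd := dist_root_iterate_treeParent (r := r) hT (T.dist r v) v
  rw [Nat.sub_self, hT.dist_eq_zero_iff] at hd
  exact ⟨hd.symm, by simp⟩

lemma iterate_treeParent_mem_descendantsAt (hT : T.Connected) {i j : ℕ} {u v : V}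
    (hu : u ∈ descendantsAt T r (i + j) v) :
    (treeParent T r)^[j] u ∈ descendantsAt T r i v ∧
      u ∈ descendantsAt T r j ((treeParent T r)^[j] u) := by
  obtain ⟨hv, h⟩ := hu
  have hj := dist_root_iterate_treeParent (r := r) hT j u
  exact ⟨⟨by rw [← Function.iterate_add_apply, hv], by lia⟩, rfl, by lia⟩

lemma descendantsAt_add_subset (hT : T.Connected) (i j : ℕ) (v : V) :
    descendantsAt T r (i + j) v ⊆ ⋃ u ∈ descendantsAt T r i v, descendantsAt T r j u := by
  intro u hu
  obtain ⟨h, h'⟩ := iterate_treeParent_mem_descendantsAt hT hu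
  exact Set.mem_biUnion h h'

lemma descendantsAt_finite (hT : T.Connected) (hfin : ∀ v, (T.neighborSet v).Finite) (k : ℕ)
    (v : V) : (descendantsAt T r k v).Finite := by
  induction k with
  | zero => simp [descendantsAt_zero]
  | succ k ih =>
    refine (ih.biUnion fun u _ => ?_).subset (descendantsAt_add_subset hT k 1 v)
    exact (hfin u).subset (descendantsAt_one_subset_neighborSet hT u)

lemma encard_descendantsAt_le (hT : T.Connected) {D : ℕ}
    (hD : ∀ v, (T.neighborSet v).encard ≤ D) (k : ℕ) (v : V) :
    (descendantsAt T r k v).encard ≤ (D ^ k : ℕ) := by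
  have hfin (v : V) : (T.neighborSet v).Finite :=
    Set.finite_of_encard_le_coe (hD v)
  induction k with
  | zero => simp [descendantsAt_zero]
  | succ k ih =>
    have hk := descendantsAt_finite (r := r) hT hfin k v
    calc (descendantsAt T r (k + 1) v).encard
        ≤ (⋃ u ∈ descendantsAt T r k v, descendantsAt T r 1 u).encard :=
          Set.encard_le_encard (descendantsAt_add_subset hT k 1 v)
      _ ≤ (descendantsAt T r k v).encard * D := encard_biUnion_le_encard_mul hk fun u _ =>
          (Set.encard_le_encard (descendantsAt_one_subset_neighborSet hT u)).trans (hD u)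
      _ ≤ (D ^ k : ℕ) * D := by gcongr
      _ = (D ^ (k + 1) : ℕ) := by rw [pow_succ, Nat.cast_mul]

lemma exists_recursion_along_treeParent {α : Type*} (hT : T.Connected) (a : α) (F : V → α → α) :
    ∃ f : V → α, f r = a ∧ ∀ v, v ≠ r → f v = F v (f (treeParent T r v)) := by
  let g (m : ℕ) : V → α := m.rec (fun _ => a) fun _ g v => F v (g (treeParent T r v))
  refine ⟨fun v => g (T.dist r v) v, by simp [g], fun v hv => ?_⟩
  simp only [dist_root_eq_dist_treeParent_add_one hT hv, g]

end RootedTree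

section BranchingCore

variable {V : Type*} {T : SimpleGraph V} {r : V} {I : Set V} {k D : ℕ}

/-- A branching core of the tree `T` rooted at `r`: a set of vertices closed under taking parents
which branches between any two levels `k` apart and contains the `k`-th ancestor of every
vertex. -/
structure IsBranchingCore (T : SimpleGraph V) (r : V) (I : Set V) (k : ℕ) : Prop where
  treeParent_mem : ∀ v ∈ I, treeParent T r v ∈ I
  two_le_encard : ∀ v ∈ I, 2 ≤ (descendantsAt T r k v ∩ I).encard
  iterate_mem : ∀ v, (treeParent T r)^[k] v ∈ I

/-- The vertices of `I` whose level in the tree `T` rooted at `r` is a multiple of `k`. -/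
def coreLevels (T : SimpleGraph V) (r : V) (I : Set V) (k : ℕ) : Set V :=
  {v ∈ I | k ∣ T.dist r v}

/-- An enumeration `c v 0, …, c v (n v - 1)` of the descendants in `I` of each `v ∈ I` which lie
`k` levels below `v`. -/
def IsChildEnumeration (T : SimpleGraph V) (r : V) (I : Set V) (k : ℕ) (n : V → ℕ)
    (c : V → ℕ → V) : Prop :=
  ∀ v ∈ I, Set.BijOn (c v) (Set.Iio (n v)) (descendantsAt T r k v ∩ I)

variable {n : V → ℕ} {c : V → ℕ → V} {f : V → List Bool}

namespace IsBranchingCore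

lemma root_mem (hI : IsBranchingCore T r I k) : r ∈ I := by
  have : (treeParent T r)^[k] r = r := Function.iterate_fixed treeParent_root k
  exact this ▸ hI.iterate_mem r

lemma pos (hI : IsBranchingCore T r I k) : 0 < k := by
  rw [Nat.pos_iff_ne_zero]
  rintro rfl
  have := (hI.two_le_encard r hI.root_mem).trans (Set.encard_le_encard Set.inter_subset_left)
  rw [descendantsAt_zero, Set.encard_singleton] at this
  exact absurd this (by norm_num)

lemma root_mem_coreLevels (hI : IsBranchingCore T r I k) : r ∈ coreLevels T r I k :=
  ⟨hI.root_mem, by simp⟩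

lemma iterate_mem_coreLevels (hT : T.Connected) (hI : IsBranchingCore T r I k) {u : V}
    (hu : u ∈ coreLevels T r I k) (hur : u ≠ r) :
    (treeParent T r)^[k] u ∈ coreLevels T r I k ∧
      u ∈ descendantsAt T r k ((treeParent T r)^[k] u) := by
  have hle : k ≤ T.dist r u := Nat.le_of_dvd (hT.pos_dist_of_ne hur.symm) hu.2
  have hd := dist_root_iterate_treeParent (r := r) hT k u
  exact ⟨⟨iterate_treeParent_mem_of_mem hI.treeParent_mem hu.1 k,
    hd ▸ Nat.dvd_sub hu.2 dvd_rfl⟩, rfl, by lia⟩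

lemma exists_iterate_mem_coreLevels (hT : T.Connected) (hI : IsBranchingCore T r I k) (v : V) :
    ∃ i ≤ 2 * k, (treeParent T r)^[i] v ∈ coreLevels T r I k := by
  set u := (treeParent T r)^[k] v
  have hlt : T.dist r u % k < k := Nat.mod_lt _ hI.pos
  refine ⟨T.dist r u % k + k, by lia, ?_⟩
  rw [Function.iterate_add_apply]
  refine ⟨iterate_treeParent_mem_of_mem hI.treeParent_mem (hI.iterate_mem v) _, ?_⟩
  rw [dist_root_iterate_treeParent hT]
  exact Nat.dvd_sub_mod _

end IsBranchingCore

lemma exists_childEnumeration (hfin : ∀ v, (descendantsAt T r k v).Finite) :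
    ∃ n c, IsChildEnumeration T r I k n c := by
  have exists_bijOn (v : V) :
      ∃ c : ℕ → V, Set.BijOn c (Set.Iio (descendantsAt T r k v ∩ I).ncard)
        (descendantsAt T r k v ∩ I) := by
    have : Nonempty V := ⟨r⟩
    refine (Set.finite_Iio _).exists_bijOn_of_encard_eq ?_
    rw [← ((hfin v).inter_of_left I).cast_ncard_eq]
    simp [Set.encard_eq_coe_toFinset_card]
  choose c hc using exists_bijOn
  exact ⟨_, c, fun v _ => hc v⟩

namespace IsChildEnumeration

lemma encard_eq (hc : IsChildEnumeration T r I k n c) {v : V} (hv : v ∈ I) :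
    (descendantsAt T r k v ∩ I).encard = n v := by
  rw [← (hc v hv).image_eq, (hc v hv).injOn.encard_image]
  simp [Set.encard_eq_coe_toFinset_card]

lemma apply_mem_descendantsAt (hc : IsChildEnumeration T r I k n c) {v : V} (hv : v ∈ I) {i : ℕ}
    (hi : i < n v) : c v i ∈ descendantsAt T r k v :=
  ((hc v hv).mapsTo hi).1

lemma apply_mem_coreLevels (hc : IsChildEnumeration T r I k n c) {v : V}
    (hv : v ∈ coreLevels T r I k) {i : ℕ} (hi : i < n v) : c v i ∈ coreLevels T r I k := by
  obtain ⟨⟨-, hd⟩, hI⟩ := (hc v hv.1).mapsTo hi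
  exact ⟨hI, hd ▸ dvd_add hv.2 dvd_rfl⟩

lemma exists_index (hc : IsChildEnumeration T r I k n c) :
    ∃ idx : V → ℕ, ∀ v ∈ I, ∀ i < n v, idx (c v i) = i := by
  let idx (u : V) : ℕ :=
    Function.invFunOn (c ((treeParent T r)^[k] u)) (Set.Iio (n ((treeParent T r)^[k] u))) u
  refine ⟨idx, fun v hv i hi => ?_⟩
  simp only [idx, (hc.apply_mem_descendantsAt hv hi).1]
  exact (hc v hv).injOn.leftInvOn_invFunOn hi

lemma exists_eq_of_mem_coreLevels (hT : T.Connected) (hI : IsBranchingCore T r I k)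
    (hc : IsChildEnumeration T r I k n c) {u : V} (hu : u ∈ coreLevels T r I k) (hur : u ≠ r) :
    ∃ v ∈ coreLevels T r I k, ∃ i < n v, c v i = u := by
  obtain ⟨hv, hd⟩ := hI.iterate_mem_coreLevels hT hu hur
  obtain ⟨i, hi, hui⟩ := (hc _ hv.1).surjOn ⟨hd, hu.1⟩
  exact ⟨_, hv, i, hi, hui⟩

end IsChildEnumeration

lemma exists_iterate_mem_apply_eq {X Y : Type*} {p : X → X} {S : Set X} {f : X → Y}
    (hf : ∀ x, x ∉ S → f x = f (p x)) {i : ℕ} {x : X} (hx : p^[i] x ∈ S) :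
    ∃ j ≤ i, p^[j] x ∈ S ∧ f x = f (p^[j] x) := by
  induction i generalizing x with
  | zero => exact ⟨0, le_rfl, hx, rfl⟩
  | succ i ih =>
    by_cases hxS : x ∈ S
    · exact ⟨0, Nat.zero_le _, hxS, rfl⟩
    · obtain ⟨j, hj, hmem, heq⟩ := ih hx
      exact ⟨j + 1, Nat.succ_le_succ hj, hmem, (hf x hxS).trans heq⟩

lemma apply_treeParent_eq_of_mem_descendantsAt {Y : Type*} {f : V → Y} (hT : T.Connected)
    (hk : 0 < k) (hf : ∀ v, v ∉ coreLevels T r I k → f v = f (treeParent T r v)) {u v : V}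
    (hv : v ∈ coreLevels T r I k) (hu : u ∈ descendantsAt T r k v) :
    f (treeParent T r u) = f v := by
  obtain ⟨l, rfl⟩ : ∃ l, k = l + 1 := ⟨k - 1, by lia⟩
  obtain ⟨rfl, hd⟩ := hu
  obtain ⟨j, hj, ⟨-, hdvd⟩, heq⟩ := exists_iterate_mem_apply_eq hf (i := l) hv
  suffices j = l by rw [heq, this, Function.iterate_succ_apply]
  -- Both `j + 1` and `l + 1` levels above `u` the level is divisible by `l + 1`.
  rw [← Function.iterate_succ_apply, dist_root_iterate_treeParent hT] at hdvd
  have : l + 1 ∣ l - j := by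
    refine (Nat.dvd_add_right hv.2).1 ?_
    convert hdvd using 1
    lia
  by_contra! hne
  have := Nat.le_of_dvd (by lia) this
  lia

lemma IsChildEnumeration.exists_coding (hT : T.Connected) (hI : IsBranchingCore T r I k)
    (hc : IsChildEnumeration T r I k n c) :
    ∃ f, IsCoding r n c (coreLevels T r I k) f ∧
      ∀ v, v ∉ coreLevels T r I k → f v = f (treeParent T r v) := by
  classical
  obtain ⟨idx, hidx⟩ := hc.exists_index
  obtain ⟨f, hroot, hf⟩ := exists_recursion_along_treeParent hT (r := r) ([] : List Bool)
    fun v w => if v ∈ coreLevels T r I k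
      then codeword (n ((treeParent T r)^[k] v)) (idx v) ++ w else w
  have hf' (v : V) (hv : v ∉ coreLevels T r I k) : f v = f (treeParent T r v) := by
    rw [hf v (ne_of_mem_of_not_mem hI.root_mem_coreLevels hv).symm, if_neg hv]
  refine ⟨f, ⟨hI.root_mem_coreLevels, hroot, fun v hv => ?_,
    fun v hv i => hc.apply_mem_coreLevels hv, fun v hv i hi => ?_⟩, hf'⟩
  · exact_mod_cast hc.encard_eq hv.1 ▸ hI.two_le_encard v hv.1
  · have hd := hc.apply_mem_descendantsAt hv.1 hi
    rw [hf _ (ne_root_of_mem_descendantsAt hI.pos hd), if_pos (hc.apply_mem_coreLevels hv hi),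
      hidx v hv.1 i hi, hd.1, apply_treeParent_eq_of_mem_descendantsAt hT hI.pos hf' hv hd]

namespace IsCoding

lemma decode_apply (hT : T.Connected) (hI : IsBranchingCore T r I k)
    (hc : IsChildEnumeration T r I k n c) (hf : IsCoding r n c (coreLevels T r I k) f) {u : V}
    (hu : u ∈ coreLevels T r I k) : decode r n c (f u) = (u, 0) := by
  induction h : T.dist r u using Nat.strong_induction_on generalizing u with
  | _ m ih =>
    by_cases hur : u = r
    · rw [hur, hf.apply_root, decode]
    · obtain ⟨v, hv, i, hi, rfl⟩ := hc.exists_eq_of_mem_coreLevels hT hI hu hur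
      have hd := (hc.apply_mem_descendantsAt hv.1 hi).2
      have := hI.pos
      rw [hf.apply_child v hv i hi]
      exact decode_codeword_append (ih _ (by lia) hv rfl) (hf.two_le v hv) hi

lemma dist_apply_treeParent_le (hT : T.Connected) (hI : IsBranchingCore T r I k)
    (hc : IsChildEnumeration T r I k n c) (hf : IsCoding r n c (coreLevels T r I k) f)
    (hf' : ∀ v, v ∉ coreLevels T r I k → f v = f (treeParent T r v)) {M : ℕ}
    (hM : ∀ v ∈ I, n v ≤ M) (u : V) : binaryTree.dist (f u) (f (treeParent T r u)) ≤ M := by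
  by_cases hu : u ∈ coreLevels T r I k
  · by_cases hur : u = r
    · simp [hur, treeParent_root]
    · obtain ⟨v, hv, i, hi, rfl⟩ := hc.exists_eq_of_mem_coreLevels hT hI hu hur
      rw [apply_treeParent_eq_of_mem_descendantsAt hT hI.pos hf' hv
        (hc.apply_mem_descendantsAt hv.1 hi), hf.apply_child v hv i hi]
      exact (binaryTree_dist_append_le _ _).trans ((length_codeword_le hi).trans (hM v hv.1))
  · simp [hf' u hu]

lemma dist_decode_cons_le (hT : T.Connected)
    (hc : IsChildEnumeration T r I k n c) (hf : IsCoding r n c (coreLevels T r I k) f) (b : Bool)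
    (w : List Bool) : T.dist (decode r n c (b :: w)).1 (decode r n c w).1 ≤ k := by
  obtain ⟨hmem, hlt, -⟩ := hf.decode_spec w
  have dist_child_le {i : ℕ} (hi : i < n (decode r n c w).1) :
      T.dist (c (decode r n c w).1 i) (decode r n c w).1 ≤ k := by
    have := dist_iterate_treeParent_le (r := r) hT k (c (decode r n c w).1 i)
    rwa [(hc.apply_mem_descendantsAt hmem.1 hi).1] at this
  cases b with
  | false => exact dist_child_le (by lia)
  | true =>
    rw [decode]
    split_ifs
    · simp
    · exact dist_child_le (by lia)

lemma dist_apply_decode_le (hf : IsCoding r n c (coreLevels T r I k) f) {M : ℕ}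
    (hM : ∀ v ∈ I, n v ≤ M) (w : List Bool) : binaryTree.dist w (f (decode r n c w).1) ≤ M := by
  obtain ⟨hmem, hle, hw⟩ := hf.decode_spec w
  have := binaryTree_dist_append_le (List.replicate (decode r n c w).2 true) (f (decode r n c w).1)
  rw [← hw, List.length_replicate] at this
  have := hM _ hmem.1
  lia

lemma dist_decode_apply_le (hT : T.Connected) (hI : IsBranchingCore T r I k)
    (hc : IsChildEnumeration T r I k n c) (hf : IsCoding r n c (coreLevels T r I k) f)
    (hf' : ∀ v, v ∉ coreLevels T r I k → f v = f (treeParent T r v)) (v : V) :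
    T.dist v (decode r n c (f v)).1 ≤ 2 * k := by
  obtain ⟨i, hi, hmem⟩ := hI.exists_iterate_mem_coreLevels hT v
  obtain ⟨j, hj, hmem', heq⟩ := exists_iterate_mem_apply_eq hf' hmem
  rw [heq, hf.decode_apply hT hI hc hmem']
  exact (dist_iterate_treeParent_le hT j v).trans (hj.trans hi)

end IsCoding

theorem IsBranchingCore.coarselyEquivalent_binaryTree (hT : T.IsTree)
    (hD : ∀ v, (T.neighborSet v).encard ≤ D) (hI : IsBranchingCore T r I k) :
    CoarselyEquivalent T binaryTree := by
  have hTc := hT.connected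
  obtain ⟨n, c, hc⟩ := exists_childEnumeration (I := I) fun v =>
    Set.finite_of_encard_le_coe (encard_descendantsAt_le (r := r) hTc hD k v)
  obtain ⟨f, hf, hf'⟩ := hc.exists_coding hTc hI
  have hM (v : V) (hv : v ∈ I) : n v ≤ D ^ k := by
    rw [← Nat.cast_le (α := ℕ∞), ← hc.encard_eq hv]
    exact (Set.encard_le_encard Set.inter_subset_left).trans (encard_descendantsAt_le hTc hD k v)
  refine ⟨2 * k + D ^ k, f, fun w => (decode r n c w).1, fun u v huv => ?_, fun w x hwx => ?_,
    fun v => ?_, fun w => ?_⟩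
  · have dist_edge_le (u : V) := hf.dist_apply_treeParent_le hTc hI hc hf' hM u
    refine le_trans ?_ (Nat.le_add_left _ _)
    rcases treeParent_eq_or_eq (r := r) hT huv with rfl | rfl
    · exact dist_edge_le u
    · exact binaryTree.dist_comm ▸ dist_edge_le v
  · have dist_edge_le (b : Bool) (w : List Bool) := hf.dist_decode_cons_le hTc hc b w
    refine le_trans ?_ (by lia : k ≤ 2 * k + D ^ k)
    rcases ((SimpleGraph.fromRel_adj _ _ _).1 hwx).2 with ⟨b, rfl⟩ | ⟨b, rfl⟩
    · exact T.dist_comm ▸ dist_edge_le b w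
    · exact dist_edge_le b x
  · exact (hf.dist_decode_apply_le hTc hI hc hf' v).trans (Nat.le_add_right _ _)
  · exact (hf.dist_apply_decode_le hM w).trans (Nat.le_add_left _ _)

end BranchingCore

section BushyTrees

variable {V : Type*} {T : SimpleGraph V} {r : V} {D : ℕ}

/-- The vertices closer to `a` than to `b`. For adjacent vertices `a` and `b` of a tree `T` this is
the component of `T - b` containing `a`. -/
def side (T : SimpleGraph V) (a b : V) : Set V :=
  {x | T.dist x a < T.dist x b}

/-- A vertex of a tree whose removal leaves at least three infinite components. -/
def IsBranchVertex (T : SimpleGraph V) (b : V) : Prop :=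
  3 ≤ {a | T.Adj b a ∧ (side T a b).Infinite}.encard

/-- A tree is bushy if its branch vertices are coarsely dense. -/
def IsBushy (T : SimpleGraph V) : Prop :=
  ∃ R : ℕ, ∀ v, ∃ b, IsBranchVertex T b ∧ T.dist v b ≤ R

/-- The vertices of the tree `T` rooted at `r` which have infinitely many descendants. -/
def trunk (T : SimpleGraph V) (r : V) : Set V :=
  {v | (descendants T r v).Infinite}

lemma dist_treeParent_lt_length (hT : T.IsTree) {x y v : V} (q : T.Walk x y)
    (hx : x ∉ descendants T r v) (hy : y ∈ descendants T r v) :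
    T.dist x (treeParent T r v) < q.length := by
  induction q with
  | nil => exact absurd hy hx
  | @cons x z y hxz q ih =>
    rw [Walk.length_cons]
    by_cases hz : z ∈ descendants T r v
    · -- An edge entering the descendants of `v` joins `v` to its parent.
      suffices x = treeParent T r v by simp [this]
      rcases treeParent_eq_or_eq (r := r) hT hxz with rfl | rfl
      · obtain ⟨i, hi⟩ := hz
        exact absurd ⟨i + 1, hi⟩ hx
      · obtain ⟨_ | i, rfl⟩ := hz
        · rfl
        · exact absurd ⟨i, rfl⟩ hx
    · calc T.dist x (treeParent T r v) ≤ T.dist x z + T.dist z (treeParent T r v) :=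
            hT.connected.dist_triangle
        _ < q.length + 1 := by
            rw [dist_eq_one_iff_adj.2 hxz, add_comm]
            exact Nat.succ_lt_succ (ih hz hy)

lemma dist_treeParent_lt_iff (hT : T.IsTree) {x v : V} :
    T.dist x (treeParent T r v) < T.dist x v ↔ x ∉ descendants T r v := by
  refine ⟨fun h hx => ?_, fun hx => ?_⟩
  · obtain ⟨hv, hd⟩ := mem_descendantsAt_of_mem_descendants hT.connected hx
    have hle := dist_iterate_treeParent_le (r := r) hT.connected (T.dist r x - T.dist r v) x
    rw [hv] at hle
    have htri : T.dist r x ≤ T.dist r (treeParent T r v) + T.dist (treeParent T r v) x :=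
      hT.connected.dist_triangle
    rw [T.dist_comm (u := treeParent T r v)] at htri
    rcases eq_or_ne v r with rfl | hvr
    · rw [treeParent_root] at h
      exact h.false
    · have := dist_root_eq_dist_treeParent_add_one hT.connected hvr
      lia
  · obtain ⟨q, hq⟩ := hT.connected.exists_walk_length_eq_dist x v
    exact hq ▸ dist_treeParent_lt_length hT q hx (mem_descendants_self v)

lemma side_treeParent_left (hT : T.IsTree) (v : V) :
    side T (treeParent T r v) v = (descendants T r v)ᶜ :=
  Set.ext fun _ => dist_treeParent_lt_iff hT

lemma side_treeParent_right (hT : T.IsTree) {v : V} (hv : v ≠ r) :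
    side T v (treeParent T r v) = descendants T r v := by
  ext x
  have := hT.dist_ne_of_adj x (adj_treeParent hT.connected hv)
  have := dist_treeParent_lt_iff hT (r := r) (x := x) (v := v)
  rw [← not_iff_not, ← this]
  change ¬ T.dist x v < T.dist x (treeParent T r v) ↔ _
  lia

lemma mem_trunk_of_mem_descendants {u v : V} (hu : u ∈ trunk T r) (huv : u ∈ descendants T r v) :
    v ∈ trunk T r := by
  obtain ⟨i, rfl⟩ := huv
  refine hu.mono ?_
  rintro _ ⟨j, rfl⟩
  exact ⟨i + j, Function.iterate_add_apply _ _ _ _⟩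

lemma treeParent_mem_trunk {v : V} (hv : v ∈ trunk T r) : treeParent T r v ∈ trunk T r :=
  mem_trunk_of_mem_descendants hv ⟨1, rfl⟩

lemma descendants_subset_insert_biUnion (hT : T.Connected) (v : V) :
    descendants T r v ⊆ insert v (⋃ u ∈ descendantsAt T r 1 v, descendants T r u) := by
  rintro x ⟨i, hi⟩
  induction i generalizing v with
  | zero => exact Or.inl hi
  | succ i ih =>
    rw [Function.iterate_succ_apply'] at hi
    by_cases hr : (treeParent T r)^[i] x = r
    · rw [hr, treeParent_root] at hi
      exact ih v (hr.trans hi)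
    · refine Or.inr (Set.mem_biUnion ⟨hi, ?_⟩ ⟨i, rfl⟩)
      rw [dist_root_eq_dist_treeParent_add_one hT hr, hi]

lemma exists_mem_trunk_descendantsAt_one (hT : T.Connected)
    (hfin : ∀ v, (T.neighborSet v).Finite) {v : V} (hv : v ∈ trunk T r) :
    (descendantsAt T r 1 v ∩ trunk T r).Nonempty := by
  by_contra hempty
  refine hv (((descendantsAt_finite hT hfin 1 v).biUnion fun u hu => ?_).insert v |>.subset
    (descendants_subset_insert_biUnion hT v))
  by_contra hu'
  exact hempty ⟨u, hu, hu'⟩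

lemma trunk_inter_descendantsAt_nonempty (hT : T.Connected)
    (hfin : ∀ v, (T.neighborSet v).Finite) (k : ℕ) {v : V} (hv : v ∈ trunk T r) :
    (descendantsAt T r k v ∩ trunk T r).Nonempty := by
  induction k with
  | zero => exact ⟨v, by simp [descendantsAt_zero], hv⟩
  | succ k ih =>
    obtain ⟨u, hu, hut⟩ := ih
    obtain ⟨w, hw, hwt⟩ := exists_mem_trunk_descendantsAt_one hT hfin hut
    exact ⟨w, mem_descendantsAt_add hw hu, hwt⟩

lemma encard_descendantsAt_inter_trunk_le_add (hT : T.Connected)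
    (hfin : ∀ v, (T.neighborSet v).Finite) (i j : ℕ) (v : V) :
    (descendantsAt T r i v ∩ trunk T r).encard ≤
      (descendantsAt T r (i + j) v ∩ trunk T r).encard := by
  refine (Set.encard_le_encard ?_).trans (Set.encard_image_le (treeParent T r)^[j] _)
  rintro u ⟨hu, hut⟩
  obtain ⟨w, hw, hwt⟩ := trunk_inter_descendantsAt_nonempty hT hfin j hut
  exact ⟨w, ⟨mem_descendantsAt_add hw hu, hwt⟩, hw.1⟩

lemma IsBranchVertex.two_le_encard (hT : T.IsTree) {b : V} (hb : IsBranchVertex T b) :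
    2 ≤ (descendantsAt T r 1 b ∩ trunk T r).encard := by
  have subset_insert : {a | T.Adj b a ∧ (side T a b).Infinite} ⊆
      insert (treeParent T r b) (descendantsAt T r 1 b ∩ trunk T r) := by
    rintro a ⟨hba, ha⟩
    refine (em (a = treeParent T r b)).imp_right fun hne => ?_
    have hab := mem_descendantsAt_one_of_adj hT hba hne
    refine ⟨hab, ?_⟩
    rwa [← hab.1, Function.iterate_one,
      side_treeParent_right hT (ne_root_of_mem_descendantsAt one_pos hab)] at ha
  have := hb.trans ((Set.encard_le_encard subset_insert).trans (Set.encard_insert_le _ _))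
  exact (WithTop.add_le_add_iff_right ENat.one_ne_top).1 this

lemma IsBranchVertex.mem_trunk (hT : T.IsTree) {b : V} (hb : IsBranchVertex T b) :
    b ∈ trunk T r := by
  have : (descendantsAt T r 1 b ∩ trunk T r).Nonempty :=
    Set.encard_pos.1 (two_pos.trans_le (hb.two_le_encard hT))
  obtain ⟨u, ⟨rfl, -⟩, hu⟩ := this
  exact treeParent_mem_trunk hu

lemma isBranchingCore_trunk (hT : T.IsTree) (hfin : ∀ v, (T.neighborSet v).Finite) {R : ℕ}
    (hR : ∀ v, ∃ b, IsBranchVertex T b ∧ T.dist v b ≤ R) :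
    IsBranchingCore T r (trunk T r) (2 * R + 1) where
  treeParent_mem _ := treeParent_mem_trunk
  iterate_mem v := by
    obtain ⟨b, hb, hvb⟩ := hR v
    exact mem_trunk_of_mem_descendants (hb.mem_trunk hT)
      (mem_descendants_iterate_of_dist_le hT (by lia))
  two_le_encard v hv := by
    -- Start from a descendant of `v` so far down that the branch vertices near it lie below `v`.
    obtain ⟨u, hu, -⟩ := trunk_inter_descendantsAt_nonempty hT.connected hfin R hv
    obtain ⟨b, hb, hub⟩ := hR u
    have hbv : b ∈ descendantsAt T r (T.dist r b - T.dist r v) v :=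
      mem_descendantsAt_of_mem_descendants hT.connected
        (hu.1 ▸ mem_descendants_iterate_of_dist_le hT hub)
    have hdist : T.dist r b ≤ T.dist r u + T.dist u b := hT.connected.dist_triangle
    have hdu := hu.2
    set d := T.dist r b - T.dist r v
    obtain ⟨j, hj⟩ : ∃ j, 2 * R + 1 = d + 1 + j := ⟨2 * R - d, by lia⟩
    calc 2 ≤ (descendantsAt T r 1 b ∩ trunk T r).encard := hb.two_le_encard hT
      _ ≤ (descendantsAt T r (d + 1) v ∩ trunk T r).encard :=
          Set.encard_le_encard (Set.inter_subset_inter_left _ fun w hw =>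
            mem_descendantsAt_add hw hbv)
      _ ≤ (descendantsAt T r (2 * R + 1) v ∩ trunk T r).encard :=
          hj ▸ encard_descendantsAt_inter_trunk_le_add hT.connected hfin (d + 1) j v

theorem IsBushy.coarselyEquivalent_binaryTree (hT : T.IsTree)
    (hD : ∀ v, (T.neighborSet v).encard ≤ D) (hbushy : IsBushy T) :
    CoarselyEquivalent T binaryTree := by
  obtain ⟨R, hR⟩ := hbushy
  obtain ⟨r⟩ := hT.connected.nonempty
  exact (isBranchingCore_trunk (r := r) hT (fun v => Set.finite_of_encard_le_coe (hD v))
    hR).coarselyEquivalent_binaryTree hT hD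

end BushyTrees

section CubicTree

variable {W : Type*} {T : SimpleGraph W}

lemma CubicTree.encard_neighborSet (hT : CubicTree T) (v : W) : (T.neighborSet v).encard = 3 := by
  have hfin : (T.neighborSet v).Finite := Set.finite_of_ncard_ne_zero (by simp [hT.2 v])
  rw [← hfin.cast_ncard_eq, hT.2 v]
  rfl

lemma CubicTree.isBranchingCore_univ (hT : CubicTree T) (r : W) :
    IsBranchingCore T r Set.univ 1 where
  treeParent_mem _ _ := Set.mem_univ _
  iterate_mem _ := Set.mem_univ _
  two_le_encard v _ := by
    have := (Set.encard_le_encard (neighborSet_subset_insert_descendantsAt (r := r) hT.1 v)).trans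
      (Set.encard_insert_le _ _)
    rw [hT.encard_neighborSet] at this
    rw [Set.inter_univ]
    exact (WithTop.add_le_add_iff_right ENat.one_ne_top).1 this

theorem CubicTree.coarselyEquivalent_binaryTree (hT : CubicTree T) :
    CoarselyEquivalent T binaryTree := by
  obtain ⟨r⟩ := hT.1.connected.nonempty
  exact (hT.isBranchingCore_univ r).coarselyEquivalent_binaryTree hT.1 (D := 3)
    fun v => (hT.encard_neighborSet v).le

end CubicTree

section QuasiTransitive

variable {V : Type*} {T : SimpleGraph V}

lemma QuasiTransitive.exists_uniform_bound (hq : QuasiTransitive T) {Q : V → ℕ → Prop}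
    (hmono : ∀ v, Monotone (Q v)) (hinv : ∀ (g : T ≃g T) v m, Q v m → Q (g v) m)
    (h : ∀ v, ∃ m, Q v m) : ∃ M, ∀ v, Q v M := by
  obtain ⟨s, hs, hsv⟩ := hq
  choose m hm using h
  obtain ⟨M, hM⟩ := (hs.image m).bddAbove
  refine ⟨M, fun v => ?_⟩
  obtain ⟨u, hu, g, rfl⟩ := hsv v
  exact hinv g u M (hmono u (hM (Set.mem_image_of_mem m hu)) (hm u))

lemma QuasiTransitive.exists_encard_neighborSet_le (hq : QuasiTransitive T)
    (hfin : ∀ v, (T.neighborSet v).Finite) : ∃ D : ℕ, ∀ v, (T.neighborSet v).encard ≤ D := by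
  refine hq.exists_uniform_bound (fun v m n hmn h => h.trans (Nat.cast_le.2 hmn))
    (fun g v m h => ?_) fun v => ⟨_, (hfin v).cast_ncard_eq.ge⟩
  rwa [← Set.encard_congr (g.mapNeighborSet v)]

lemma dist_apply_iso (hT : T.Connected) (g : T ≃g T) (u v : V) :
    T.dist (g u) (g v) = T.dist u v := by
  have dist_apply_le (g : T ≃g T) (u v : V) : T.dist (g u) (g v) ≤ T.dist u v := by
    have := dist_map_le_mul_dist hT hT (f := g) (C := 1)
      (fun u v huv => (dist_eq_one_iff_adj.2 (g.map_adj_iff.2 huv)).le) u v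
    rwa [one_mul] at this
  refine le_antisymm (dist_apply_le g u v) ?_
  simpa using dist_apply_le g.symm (g u) (g v)

lemma side_apply_iso (hT : T.Connected) (g : T ≃g T) (a b : V) :
    side T (g a) (g b) = g '' side T a b := by
  ext x
  obtain ⟨x, rfl⟩ := g.surjective x
  rw [g.injective.mem_set_image]
  simp only [side, Set.mem_ofPred_eq, dist_apply_iso hT]

lemma IsBranchVertex.apply_iso (hT : T.Connected) (g : T ≃g T) {b : V}
    (hb : IsBranchVertex T b) : IsBranchVertex T (g b) := by
  refine hb.trans ?_
  rw [← g.injective.encard_image]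
  refine Set.encard_le_encard ?_
  rintro _ ⟨a, ⟨hba, ha⟩, rfl⟩
  exact ⟨g.map_adj_iff.2 hba, side_apply_iso hT g a b ▸ ha.image g.injective.injOn⟩

lemma QuasiTransitive.isBushy (hq : QuasiTransitive T) (hT : T.Connected) {b : V}
    (hb : IsBranchVertex T b) : IsBushy T := by
  refine hq.exists_uniform_bound (Q := fun v m => ∃ b, IsBranchVertex T b ∧ T.dist v b ≤ m)
    (fun v m n hmn ⟨b, hb, hvb⟩ => ⟨b, hb, hvb.trans hmn⟩) (fun g v m => ?_)
    fun v => ⟨_, b, hb, le_rfl⟩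
  rintro ⟨b, hb, hvb⟩
  exact ⟨g b, hb.apply_iso hT g, (dist_apply_iso hT g v b).trans_le hvb⟩

end QuasiTransitive

section Ends

variable {V : Type*} {T : SimpleGraph V} {r : V}

lemma infinite_side_of_mem_trunk (hT : T.IsTree) {b v : V}
    (hv : v ∈ descendantsAt T r 1 b ∩ trunk T r) : T.Adj b v ∧ (side T v b).Infinite := by
  refine ⟨descendantsAt_one_subset_neighborSet hT.connected b hv.1, ?_⟩
  have hside := side_treeParent_right hT (ne_root_of_mem_descendantsAt one_pos hv.1)
  rw [← hv.1.1, Function.iterate_one, hside]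
  exact hv.2

lemma infinite_side_treeParent (hT : T.IsTree) {b z : V} (hz : z ∈ trunk T r)
    (hd : T.dist r z = T.dist r b + 1) (hzb : treeParent T r z ≠ b) :
    T.Adj b (treeParent T r b) ∧ (side T (treeParent T r b) b).Infinite := by
  have side_infinite : (side T (treeParent T r b) b).Infinite := by
    rw [side_treeParent_left hT]
    refine hz.mono fun u huz hub => hzb ?_
    obtain ⟨hz, hdz⟩ := mem_descendantsAt_of_mem_descendants hT.connected huz
    obtain ⟨hb, -⟩ := mem_descendantsAt_of_mem_descendants hT.connected hub
    rwa [show T.dist r u - T.dist r b = T.dist r u - T.dist r z + 1 by lia,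
      Function.iterate_succ_apply', hz] at hb
  refine ⟨adj_treeParent hT.connected ?_, side_infinite⟩
  rintro rfl
  simp [side, treeParent_root] at side_infinite

lemma isBranchVertex_of_mem_trunk (hT : T.IsTree) {b x y z : V}
    (hx : x ∈ descendantsAt T r 1 b ∩ trunk T r) (hy : y ∈ descendantsAt T r 1 b ∩ trunk T r)
    (hz : z ∈ trunk T r) (hd : T.dist r z = T.dist r b + 1) (hxy : x ≠ y) (hxz : x ≠ z)
    (hyz : y ≠ z) : IsBranchVertex T b := by
  obtain ⟨a, ha, hxa, hya⟩ : ∃ a, (T.Adj b a ∧ (side T a b).Infinite) ∧ x ≠ a ∧ y ≠ a := by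
    by_cases hzb : treeParent T r z = b
    · exact ⟨z, infinite_side_of_mem_trunk hT ⟨⟨hzb, hd⟩, hz⟩, hxz, hyz⟩
    · have hdb : T.dist r (treeParent T r b) ≤ T.dist r b := by
        simpa using (dist_root_iterate_treeParent (r := r) hT.connected 1 b).le.trans
          (Nat.sub_le _ 1)
      refine ⟨_, infinite_side_treeParent hT hz hd hzb, ?_, ?_⟩
      · rintro rfl
        exact absurd hx.1.2 (by lia)
      · rintro rfl
        exact absurd hy.1.2 (by lia)
  rw [IsBranchVertex, ← Set.encard_eq_three.2 ⟨x, y, a, hxy, hxa, hya, rfl⟩]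
  refine Set.encard_le_encard ?_
  rintro w (rfl | rfl | rfl)
  · exact infinite_side_of_mem_trunk hT hx
  · exact infinite_side_of_mem_trunk hT hy
  · exact ha

lemma exists_isBranchVertex_of_three_le_encard (hT : T.IsTree) {m : ℕ}
    (h : 3 ≤ (descendantsAt T r m r ∩ trunk T r).encard) : ∃ b, IsBranchVertex T b := by
  induction m with
  | zero =>
    have := h.trans (Set.encard_le_encard Set.inter_subset_left)
    rw [descendantsAt_zero, Set.encard_singleton] at this
    exact absurd this (by norm_num)
  | succ m ih =>
    set L := descendantsAt T r (m + 1) r ∩ trunk T r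
    have mapsTo : Set.MapsTo (treeParent T r) L (descendantsAt T r m r ∩ trunk T r) :=
      fun u hu => ⟨(iterate_treeParent_mem_descendantsAt hT.connected hu.1).1,
        treeParent_mem_trunk hu.2⟩
    by_cases hinj : Set.InjOn (treeParent T r) L
    · exact ih (h.trans (Set.encard_le_encard_of_injOn mapsTo hinj))
    · obtain ⟨x, hx, y, hy, hp, hxy⟩ : ∃ x ∈ L, ∃ y ∈ L,
          treeParent T r x = treeParent T r y ∧ x ≠ y := by
        simpa [Set.InjOn] using hinj
      obtain ⟨z, hz, hzxy⟩ : ∃ z ∈ L, z ∉ ({x, y} : Set V) := by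
        by_contra! hL
        have := h.trans ((Set.encard_le_encard hL).trans (Set.encard_pair hxy).le)
        exact absurd this (by norm_num)
      have hx1 : x ∈ descendantsAt T r 1 (treeParent T r x) :=
        (iterate_treeParent_mem_descendantsAt hT.connected hx.1).2
      have hy1 : y ∈ descendantsAt T r 1 (treeParent T r y) :=
        (iterate_treeParent_mem_descendantsAt hT.connected hy.1).2
      have hd : T.dist r z = T.dist r (treeParent T r x) + 1 := by
        rw [hz.1.2, ← hx.1.2, hx1.2]
      rw [Set.mem_insert_iff, Set.mem_singleton_iff, not_or] at hzxy
      exact ⟨_, isBranchVertex_of_mem_trunk hT ⟨hx1, hx.2⟩ ⟨hp ▸ hy1, hy.2⟩ hz.2 hd hxy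
        (Ne.symm hzxy.1) (Ne.symm hzxy.2)⟩

lemma finite_setOf_dist_le (hT : T.Connected) (hfin : ∀ v, (T.neighborSet v).Finite) (n : ℕ) :
    {v | T.dist r v ≤ n}.Finite :=
  ((Set.finite_Iic n).biUnion fun m _ => descendantsAt_finite (r := r) hT hfin m r).subset
    fun v hv => Set.mem_biUnion (x := T.dist r v) hv (mem_descendantsAt_root hT v)

lemma iterate_treeParent_mem_componentCompl (hT : T.Connected) {n : ℕ} {K : Set V}
    (hK : K = {v | T.dist r v ≤ n}) {C : T.ComponentCompl K} {v : V} (hv : v ∈ C) {i : ℕ}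
    (hi : n < T.dist r v - i) : (treeParent T r)^[i] v ∈ C := by
  induction i with
  | zero => exact hv
  | succ i ih =>
    have hd := dist_root_iterate_treeParent (r := r) hT i v
    have hd' := dist_root_iterate_treeParent (r := r) hT (i + 1) v
    rw [Function.iterate_succ_apply'] at hd' ⊢
    refine ComponentCompl.mem_of_adj _ _ (ih (by lia)) ?_ (adj_treeParent hT ?_)
    · rw [hK, Set.mem_ofPred_eq]
      lia
    · intro hr
      rw [hr, dist_self] at hd
      lia

lemma exists_mem_trunk_of_componentCompl_infinite (hT : T.Connected)
    (hfin : ∀ v, (T.neighborSet v).Finite) {n : ℕ} {K : Set V} (hK : K = {v | T.dist r v ≤ n})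
    {C : T.ComponentCompl K} (hC : (C : Set V).Infinite) :
    ∃ u ∈ C, u ∈ descendantsAt T r (n + 1) r ∩ trunk T r := by
  by_contra! h
  refine hC (((descendantsAt_finite (r := r) hT hfin (n + 1) r).inter_of_left C).biUnion
    (t := descendants T r) (fun u hu => ?_) |>.subset fun v hv => ?_)
  · by_contra hinf
    exact h u hu.2 ⟨hu.1, hinf⟩
  · have hvK : ¬ T.dist r v ≤ n := fun hle => ComponentCompl.notMem_of_mem hv (hK ▸ hle)
    have hd := dist_root_iterate_treeParent (r := r) hT (T.dist r v - (n + 1)) v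
    refine Set.mem_biUnion ⟨?_, iterate_treeParent_mem_componentCompl hT hK hv
      (i := T.dist r v - (n + 1)) (by lia)⟩ ⟨_, rfl⟩
    convert mem_descendantsAt_root hT _
    lia

lemma eventually_end_val_ne {e e' : T.end} (h : e ≠ e') :
    ∀ᶠ K : Finset V in Filter.atTop, e.val (Opposite.op K) ≠ e'.val (Opposite.op K) := by
  obtain ⟨⟨K⟩, hK⟩ := Function.ne_iff.1 (Subtype.coe_injective.ne h)
  filter_upwards [Filter.eventually_ge_atTop K] with L hKL heq
  refine hK ?_
  rw [← e.prop (CategoryTheory.opHomOfLE hKL), ← e'.prop (CategoryTheory.opHomOfLE hKL)]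
  exact congrArg _ heq

lemma infinite_supp_end_val (e : T.end) (K : Finset V) :
    (e.val (Opposite.op K) : T.ComponentCompl K).supp.Infinite := by
  refine (ComponentCompl.infinite_iff_in_all_ranges _).2 fun L h => ?_
  exact ⟨e.val (Opposite.op L), e.prop (CategoryTheory.opHomOfLE h)⟩

lemma exists_encard_le_encard_trunk (hT : T.Connected) (hfin : ∀ v, (T.neighborSet v).Finite)
    {E : Set T.end} (hE : E.Finite) (r : V) :
    ∃ m, E.encard ≤ (descendantsAt T r m r ∩ trunk T r).encard := by
  have := hE.to_subtype
  have eventually_injective : ∀ᶠ K : Finset V in Filter.atTop, ∀ e e' : E, e ≠ e' →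
      e.1.val (Opposite.op K) ≠ e'.1.val (Opposite.op K) := by
    simp only [Filter.eventually_all]
    exact fun e e' h => eventually_end_val_ne (Subtype.coe_injective.ne h)
  obtain ⟨K, hK⟩ := Filter.eventually_atTop.1 eventually_injective
  let n := K.sup (T.dist r)
  have hn := finite_setOf_dist_le (r := r) hT hfin n
  have hKn : K ≤ hn.toFinset := fun v hv =>
    hn.mem_toFinset.2 (Finset.le_sup (f := T.dist r) hv)
  choose u hu hut using fun e : E => exists_mem_trunk_of_componentCompl_infinite hT hfin
    hn.coe_toFinset (infinite_supp_end_val e.1 hn.toFinset)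
  have u_injective : Function.Injective u := by
    intro e e' h
    by_contra hne
    exact Set.disjoint_left.1 (ComponentCompl.pairwise_disjoint (hK _ hKn e e' hne)) (hu e)
      (h ▸ hu e')
  refine ⟨n + 1, ?_⟩
  calc E.encard = (Set.range u).encard := by
        rw [← Set.image_univ, u_injective.encard_image, Set.encard_univ, ENat.card_coe_set_eq]
    _ ≤ _ := Set.encard_le_encard (Set.range_subset_iff.2 hut)

theorem exists_isBranchVertex_of_three_le_card_end (hT : T.IsTree)
    (hfin : ∀ v, (T.neighborSet v).Finite) (h : 3 ≤ ENat.card T.end) :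
    ∃ b, IsBranchVertex T b := by
  obtain ⟨r⟩ := hT.connected.nonempty
  rw [← Set.encard_univ] at h
  obtain ⟨E, -, hE⟩ := Set.exists_subset_encard_eq h
  obtain ⟨m, hm⟩ := exists_encard_le_encard_trunk hT.connected hfin
    (Set.finite_of_encard_eq_coe hE) r
  exact exists_isBranchVertex_of_three_le_encard hT (hE ▸ hm)

end Ends

theorem tree_quasiIsometric_cubicTree_general {V W : Type*} (T : SimpleGraph V)
    (T3 : SimpleGraph W) (hT : T.IsTree) (hdeg : ∃ D : ℕ, ∀ v, (T.neighborSet v).encard ≤ D)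
    (hbushy : IsBushy T) (h3 : CubicTree T3) : QuasiIsometric T T3 := by
  obtain ⟨D, hD⟩ := hdeg
  have hc := hbushy.coarselyEquivalent_binaryTree hT hD
  exact (hc.trans hT.connected binaryTree_connected h3.1.connected
    h3.coarselyEquivalent_binaryTree.symm).quasiIsometric hT.connected h3.1.connected

/-- **Lemma.** Every locally finite tree with infinitely many ends and finitely many orbits
of vertices is quasi-isometric to the 3-regular tree. -/
theorem tree_quasiIsometric_cubicTree {V W : Type u} (T : SimpleGraph V) (T3 : SimpleGraph W)
    (hT : T.IsTree) (hlf : LocallyFiniteGraph T) (he : Infinite T.end)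
    (hq : QuasiTransitive T) (h3 : CubicTree T3) :
    QuasiIsometric T T3 := by
  obtain ⟨b, hb⟩ := exists_isBranchVertex_of_three_le_card_end hT hlf (by simp)
  exact tree_quasiIsometric_cubicTree_general T T3 hT (hq.exists_encard_neighborSet_le hlf)
    (hq.isBushy hT.connected hb) h3
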